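/- For generic α ∈ ℂ, the gauge variable 𝒱_α = Φ_ξ(α)·V_α satisfies (ŵ − w̃)·𝒱̂̃_α = Φ_δ(α)·𝒱̂_α − Φ_ε(α)·𝒱̃_α, where Φ_δ(α) = σ(α+δ)/(σ(δ)σ(α)) and Φ_ε(α) = σ(α+ε)/(σ(ε)σ(α)), 𝒱̂̃_α denotes 𝒱_α evaluated at (n+1,m+1,h), 𝒱̂_α at (n,m+1,h), 𝒱̃_α at (n+1,m,h), and similarly for w. (These coefficients Φ_δ(α), Φ_ε(α) are the precise, gauge-exact values of the coefficients p_α, q_α in the paper.) -/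

import Mathlib

open scoped BigOperators

noncomputable section

/-- A period lattice in `ℂ` spanned by two `ℝ`-independent periods. -/
structure EllLattice where
  ω₁ : ℂ
  ω₂ : ℂ
  indep : ∀ a b : ℝ, a • ω₁ + b • ω₂ = 0 → a = 0 ∧ b = 0

namespace EllLattice

/-- Membership in the lattice `Λ = ℤω₁ + ℤω₂`. -/
def mem (L : EllLattice) (z : ℂ) : Prop := ∃ m n : ℤ, z = m • L.ω₁ + n • L.ω₂

/-- The lattice point with integer coordinates `p = (m, n)`. -/
def per (L : EllLattice) (p : ℤ × ℤ) : ℂ := p.1 • L.ω₁ + p.2 • L.ω₂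

/-- The Weierstrass sigma function associated to the lattice, defined by its
Hadamard product over the nonzero lattice points. -/
def sigma (L : EllLattice) (z : ℂ) : ℂ :=
  z * ∏' p : {p : ℤ × ℤ // p ≠ 0},
      ((1 - z / L.per p.1) *
        Complex.exp (z / L.per p.1 + z ^ 2 / (2 * (L.per p.1) ^ 2)))

/-- The Weierstrass zeta function `ζ = σ′/σ`. -/
def zeta (L : EllLattice) (z : ℂ) : ℂ := deriv L.sigma z / L.sigma z

/-- The Weierstrass `℘`-function `℘ = −ζ′`. -/
def wp (L : EllLattice) (z : ℂ) : ℂ := - deriv L.zeta z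

/-- `Φ_ξ(κ) = σ(ξ+κ)/(σ(ξ)σ(κ))`. -/
def Phi (L : EllLattice) (ξ κ : ℂ) : ℂ := L.sigma (ξ + κ) / (L.sigma ξ * L.sigma κ)

/-- The Lamé function `Ψ_ξ(κ) = Φ_ξ(κ)·e^{−ζ(ξ)κ}`. -/
def Psi (L : EllLattice) (ξ κ : ℂ) : ℂ := L.Phi ξ κ * Complex.exp (-(L.zeta ξ) * κ)

/-- `η_δ(ξ) = ζ(ξ+δ) − ζ(ξ) − ζ(δ)`. -/
def eta (L : EllLattice) (δ ξ : ℂ) : ℂ := L.zeta (ξ + δ) - L.zeta ξ - L.zeta δ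

/-- `χ_{α,β}(ξ) = ζ(α) + ζ(β) + ζ(ξ) − ζ(ξ+α+β)`. -/
def chi (L : EllLattice) (α β ξ : ℂ) : ℂ :=
  L.zeta α + L.zeta β + L.zeta ξ - L.zeta (ξ + α + β)

end EllLattice

open Matrix

/-- All the data entering the elliptic (N,N′)-soliton solutions of the lattice KP system:
a period lattice, lattice parameters `δ, ε, λ`, a base point `ξ₀`, rapidity parameters
`κ_i, κ′_j`, initial plane-wave constants `ρ⁰_i, ν⁰_j` and a constant `N′×N` matrix `C`. -/
structure KPData (N N' : ℕ) where
  L : EllLattice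
  del : ℂ
  eps : ℂ
  lam : ℂ
  xi0 : ℂ
  κ : Fin N → ℂ
  κ' : Fin N' → ℂ
  ρ0 : Fin N → ℂ
  ν0 : Fin N' → ℂ
  C : Matrix (Fin N') (Fin N) ℂ

namespace KPData

variable {N N' : ℕ}

/-- `ξ = ξ₀ + nδ + mε + hλ`. -/
def xi (D : KPData N N') (n m h : ℤ) : ℂ :=
  D.xi0 + n • D.del + m • D.eps + h • D.lam

/-- The plane-wave factor `ρ_i(n,m,h)`. -/
def ρ (D : KPData N N') (i : Fin N) (n m h : ℤ) : ℂ :=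
  (Complex.exp (-(D.L.zeta D.del) * D.κ i) * D.L.Psi D.del (-(D.κ i))) ^ n *
  (Complex.exp (-(D.L.zeta D.eps) * D.κ i) * D.L.Psi D.eps (-(D.κ i))) ^ m *
  (Complex.exp (-(D.L.zeta D.lam) * D.κ i) * D.L.Psi D.lam (-(D.κ i))) ^ h *
  Complex.exp (D.L.zeta (D.xi n m h) * D.κ i) * D.ρ0 i

/-- The plane-wave factor `ν_j(n,m,h)`. -/
def ν (D : KPData N N') (j : Fin N') (n m h : ℤ) : ℂ :=
  (Complex.exp (D.L.zeta D.del * D.κ' j) * D.L.Psi D.del (D.κ' j)) ^ (-n) *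
  (Complex.exp (D.L.zeta D.eps * D.κ' j) * D.L.Psi D.eps (D.κ' j)) ^ (-m) *
  (Complex.exp (D.L.zeta D.lam * D.κ' j) * D.L.Psi D.lam (D.κ' j)) ^ (-h) *
  Complex.exp (D.L.zeta (D.xi n m h) * D.κ' j) * D.ν0 j

/-- The dressed elliptic Cauchy matrix `M_{ij} = ρ_i Ψ_ξ(κ_i + κ′_j) ν_j`. -/
def M (D : KPData N N') (n m h : ℤ) : Matrix (Fin N) (Fin N') ℂ :=
  Matrix.of fun i j => D.ρ i n m h * D.L.Psi (D.xi n m h) (D.κ i + D.κ' j) * D.ν j n m h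

/-- The column vector `r = (ρ_i Ψ_ξ(κ_i))_i`. -/
def r (D : KPData N N') (n m h : ℤ) : Fin N → ℂ :=
  fun i => D.ρ i n m h * D.L.Psi (D.xi n m h) (D.κ i)

/-- The column vector `s = (ν_j Ψ_ξ(κ′_j))_j`. -/
def s (D : KPData N N') (n m h : ℤ) : Fin N' → ℂ :=
  fun j => D.ν j n m h * D.L.Psi (D.xi n m h) (D.κ' j)

/-- The τ-function `τ = det(1 + MC)`. -/
def τ (D : KPData N N') (n m h : ℤ) : ℂ := (1 + D.M n m h * D.C).det

/-- The diagonal matrix `χ_{α,K}(ξ) = diag(χ_{α,κ_i}(ξ))`. -/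
def DK (D : KPData N N') (α : ℂ) (n m h : ℤ) : Matrix (Fin N) (Fin N) ℂ :=
  Matrix.diagonal fun i => D.L.chi α (D.κ i) (D.xi n m h)

/-- The diagonal matrix `χ_{β,K′}(ξ) = diag(χ_{β,κ′_j}(ξ))`. -/
def DK' (D : KPData N N') (β : ℂ) (n m h : ℤ) : Matrix (Fin N') (Fin N') ℂ :=
  Matrix.diagonal fun j => D.L.chi β (D.κ' j) (D.xi n m h)

/-- `W_β = 1 − sᵀ (χ_{β,K′}(ξ))⁻¹ C (1+MC)⁻¹ r`. -/
def W (D : KPData N N') (β : ℂ) (n m h : ℤ) : ℂ :=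
  1 - D.s n m h ⬝ᵥ ((D.DK' β n m h)⁻¹ *ᵥ (D.C *ᵥ ((1 + D.M n m h * D.C)⁻¹ *ᵥ D.r n m h)))

/-- `V_α = 1 − sᵀ (1+CM)⁻¹ C (χ_{α,K}(ξ))⁻¹ r`. -/
def V (D : KPData N N') (α : ℂ) (n m h : ℤ) : ℂ :=
  1 - D.s n m h ⬝ᵥ ((1 + D.C * D.M n m h)⁻¹ *ᵥ (D.C *ᵥ ((D.DK α n m h)⁻¹ *ᵥ D.r n m h)))

/-- `w₀ = sᵀ C (1+MC)⁻¹ r`. -/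
def w0 (D : KPData N N') (n m h : ℤ) : ℂ :=
  D.s n m h ⬝ᵥ (D.C *ᵥ ((1 + D.M n m h * D.C)⁻¹ *ᵥ D.r n m h))

/-- `w = ζ(ξ) − w₀ − nζ(δ) − mζ(ε) − hζ(λ)`. -/
def w (D : KPData N N') (n m h : ℤ) : ℂ :=
  D.L.zeta (D.xi n m h) - D.w0 n m h - n • D.L.zeta D.del - m • D.L.zeta D.eps -
    h • D.L.zeta D.lam

/-- `S_{β,α} = sᵀ (χ_{β,K′}(ξ))⁻¹ C (1+MC)⁻¹ (χ_{α,K}(ξ))⁻¹ r`. -/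
def S (D : KPData N N') (β α : ℂ) (n m h : ℤ) : ℂ :=
  D.s n m h ⬝ᵥ ((D.DK' β n m h)⁻¹ *ᵥ
    (D.C *ᵥ ((1 + D.M n m h * D.C)⁻¹ *ᵥ ((D.DK α n m h)⁻¹ *ᵥ D.r n m h))))

/-- `u_α = (1+MC)⁻¹ (χ_{α,K}(ξ))⁻¹ r`. -/
def u (D : KPData N N') (α : ℂ) (n m h : ℤ) : Fin N → ℂ :=
  (1 + D.M n m h * D.C)⁻¹ *ᵥ ((D.DK α n m h)⁻¹ *ᵥ D.r n m h)

/-- `u₀ = (1+MC)⁻¹ r`. -/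
def u0 (D : KPData N N') (n m h : ℤ) : Fin N → ℂ :=
  (1 + D.M n m h * D.C)⁻¹ *ᵥ D.r n m h

/-- the adjoint (row) vector `ᵗu_β = sᵀ (χ_{β,K′}(ξ))⁻¹ (1+CM)⁻¹`. -/
def tu (D : KPData N N') (β : ℂ) (n m h : ℤ) : Fin N' → ℂ :=
  (D.s n m h ᵥ* (D.DK' β n m h)⁻¹) ᵥ* (1 + D.C * D.M n m h)⁻¹

/-- the adjoint (row) vector `ᵗu₀ = sᵀ (1+CM)⁻¹`. -/
def tu0 (D : KPData N N') (n m h : ℤ) : Fin N' → ℂ :=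
  D.s n m h ᵥ* (1 + D.C * D.M n m h)⁻¹

/-- The gauge variable `𝒱_α = Φ_ξ(α)·V_α`. -/
def calV (D : KPData N N') (α : ℂ) (n m h : ℤ) : ℂ :=
  D.L.Phi (D.xi n m h) α * D.V α n m h

/-- The gauge variable `𝒲_β = Φ_ξ(β)·W_β`. -/
def calW (D : KPData N N') (β : ℂ) (n m h : ℤ) : ℂ :=
  D.L.Phi (D.xi n m h) β * D.W β n m h

/-- The Schwarzian variable `Z_{β,α} = Φ_ξ(α+β)·(1 − χ_{α,β}(ξ)·S_{β,α})`. -/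
def Z (D : KPData N N') (β α : ℂ) (n m h : ℤ) : ℂ :=
  D.L.Phi (D.xi n m h) (α + β) * (1 - D.L.chi α β (D.xi n m h) * D.S β α n m h)

/-- Genericity of the parameters (together with finitely many auxiliary points `extra`):
no nontrivial integer combination of `ξ₀, δ, ε, λ`, the rapidity parameters and the
auxiliary points lies on the lattice.  In particular all arguments of `σ` occurring in
the soliton solutions and their shifts lie outside `Λ`. -/
def Generic {P : ℕ} (D : KPData N N') (extra : Fin P → ℂ) : Prop :=
  ∀ (c0 cn cm ch : ℤ) (a : Fin N → ℤ) (b : Fin N' → ℤ) (e : Fin P → ℤ),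
    ¬ (c0 = 0 ∧ cn = 0 ∧ cm = 0 ∧ ch = 0 ∧ a = 0 ∧ b = 0 ∧ e = 0) →
    ¬ D.L.mem (c0 • D.xi0 + cn • D.del + cm • D.eps + ch • D.lam +
      (∑ i, a i • D.κ i) + (∑ j, b j • D.κ' j) + ∑ t, e t • extra t)

end KPData

/-!
Liouville's theorem, applied to products `σ(z + a) σ(z - a)`, yields the three-term identity of the
sigma function. Divided by sigma factors it is the Fay identity
`Φ_x(k + b) Φ_d(b) = Φ_x(k) Φ_{x+d}(b) + Φ_{x+d}(k + b) Φ_d(-k)`,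
and its first-order degeneration is `Φ_ξ(α) Φ_ξ(β) = χ_{α,β}(ξ) Φ_ξ(α + β)`.

By the Fay identity a lattice step changes the Cauchy matrix by `M' = M - r s'ᵀ`, and the same
identity with `α` in place of `κ'_j` transforms the vector `a = Φ_ξ(α) χ_{α,K}(ξ)⁻¹ r`. Inverting
the rank-one update expresses `tᵀ C (1 + M'C)⁻¹ a'` through `tᵀ C (1 + MC)⁻¹ a` and
`tᵀ C (1 + MC)⁻¹ r`, with coefficients `Φ_d(α)` and `-𝒱'_α`. Taking the steps `δ` and `ε` into the
same site, with `t` the vector `s` at their starting points, and subtracting gives the relation: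
the second identity makes the difference of the two vectors `s` a multiple of `s'`, with the same
zeta factor as in `ŵ - w̃`.
-/

/-- The Weierstrass elementary factor `E₂(u) = (1 - u) exp (u + u² / 2)` of genus two. In the
product below it is evaluated at `u = z / l`, so that by the convention `z / 0 = 0` the lattice
point `l = 0` contributes the factor `1`. -/
def elementaryFactor (u : ℂ) : ℂ := (1 - u) * Complex.exp (u + u ^ 2 / 2)

lemma elementaryFactor_zero : elementaryFactor 0 = 1 := by simp [elementaryFactor]

lemma elementaryFactor_eq_zero_iff {u : ℂ} : elementaryFactor u = 0 ↔ u = 1 := by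
  simp [elementaryFactor, sub_eq_zero, eq_comm (a := u)]

lemma hasDerivAt_elementaryFactor (u : ℂ) :
    HasDerivAt elementaryFactor (-(u ^ 2 * Complex.exp (u + u ^ 2 / 2))) u := by
  have hexp : HasDerivAt (fun u : ℂ ↦ u + u ^ 2 / 2) (1 + u) u := by
    simpa using (hasDerivAt_id' u).fun_add ((hasDerivAt_pow 2 u).div_const 2)
  exact (((hasDerivAt_id' u).const_sub 1).mul hexp.cexp).congr_deriv (by ring)

lemma differentiable_elementaryFactor : Differentiable ℂ elementaryFactor :=
  fun u ↦ (hasDerivAt_elementaryFactor u).differentiableAt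

lemma norm_elementaryFactor_sub_one_le {u : ℂ} (hu : ‖u‖ ≤ 1) :
    ‖elementaryFactor u - 1‖ ≤ Real.exp (3 / 2) * ‖u‖ ^ 3 := by
  have hderiv : ∀ v ∈ Metric.closedBall (0 : ℂ) ‖u‖,
      ‖-(v ^ 2 * Complex.exp (v + v ^ 2 / 2))‖ ≤ ‖u‖ ^ 2 * Real.exp (3 / 2) := by
    intro v hv
    replace hv : ‖v‖ ≤ ‖u‖ := mem_closedBall_zero_iff.mp hv
    have hexponent : ‖v + v ^ 2 / 2‖ ≤ 3 / 2 :=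
      calc ‖v + v ^ 2 / 2‖ ≤ ‖v‖ + ‖v‖ ^ 2 / 2 :=
            (norm_add_le v (v ^ 2 / 2)).trans_eq (by simp)
        _ ≤ 3 / 2 := by nlinarith [norm_nonneg v]
    rw [norm_neg, norm_mul, norm_pow]
    gcongr
    exact (Complex.norm_exp_le_exp_norm _).trans (Real.exp_le_exp.mpr hexponent)
  calc ‖elementaryFactor u - 1‖ = ‖elementaryFactor u - elementaryFactor 0‖ := by
        rw [elementaryFactor_zero]
    _ ≤ ‖u‖ ^ 2 * Real.exp (3 / 2) * ‖u - 0‖ :=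
        (convex_closedBall (0 : ℂ) ‖u‖).norm_image_sub_le_of_norm_hasDerivWithin_le
          (fun v _ ↦ (hasDerivAt_elementaryFactor v).hasDerivWithinAt) hderiv
          (by simp) (by simp)
    _ = Real.exp (3 / 2) * ‖u‖ ^ 3 := by rw [sub_zero]; ring

section LatticeProduct

open Filter Metric
open scoped Topology

/-- The genus two canonical product `∏ E₂(z / l)` over the points `l` of a lattice in `ℂ`. -/
def latticeProduct (Λ : Submodule ℤ ℂ) (z : ℂ) : ℂ := ∏' l : Λ, elementaryFactor (z / l)

lemma latticeProduct_zero (Λ : Submodule ℤ ℂ) : latticeProduct Λ 0 = 1 := by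
  simp [latticeProduct, elementaryFactor_zero]

lemma latticeProduct_neg (Λ : Submodule ℤ ℂ) (z : ℂ) :
    latticeProduct Λ (-z) = latticeProduct Λ z := by
  unfold latticeProduct
  rw [← (Equiv.neg Λ).tprod_eq]
  simp

lemma elementaryFactor_div_ne_zero {l z : ℂ} (hz : z ≠ l) : elementaryFactor (z / l) ≠ 0 := by
  rw [ne_eq, elementaryFactor_eq_zero_iff]
  exact fun h ↦ hz (eq_of_div_eq_one h)

lemma differentiable_elementaryFactor_div (l : ℂ) :
    Differentiable ℂ fun z ↦ elementaryFactor (z / l) :=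
  differentiable_elementaryFactor.comp (differentiable_id.div_const l)

lemma logDeriv_elementaryFactor_div {l z : ℂ} (hl : l ≠ 0) (hz : z ≠ l) :
    logDeriv (fun z ↦ elementaryFactor (z / l)) z = 1 / (z - l) + 1 / l + z / l ^ 2 := by
  have hderiv := ((hasDerivAt_elementaryFactor (z / l)).comp z
    ((hasDerivAt_id z).div_const l)).deriv
  have hzl : l - z ≠ 0 := sub_ne_zero.mpr hz.symm
  have hzl' : z - l ≠ 0 := sub_ne_zero.mpr hz
  have hexp := Complex.exp_ne_zero (z / l + (z / l) ^ 2 / 2)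
  simp only [Function.comp_def, id_eq] at hderiv
  rw [logDeriv_apply, hderiv, elementaryFactor]
  generalize Complex.exp (z / l + (z / l) ^ 2 / 2) = e at hexp ⊢
  field_simp
  ring

lemma norm_elementaryFactor_div_sub_one_le {R : ℝ} {z l : ℂ} (hz : ‖z‖ ≤ R) (hl : R ≤ ‖l‖) :
    ‖elementaryFactor (z / l) - 1‖ ≤ Real.exp (3 / 2) * R ^ 3 * ‖l‖⁻¹ ^ 3 := by
  have hdiv : ‖z / l‖ ≤ R * ‖l‖⁻¹ := by rw [norm_div, div_eq_mul_inv]; gcongr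
  have hone : R * ‖l‖⁻¹ ≤ 1 := by
    rw [← div_eq_mul_inv]; exact div_le_one_of_le₀ hl (norm_nonneg l)
  calc ‖elementaryFactor (z / l) - 1‖ ≤ Real.exp (3 / 2) * ‖z / l‖ ^ 3 :=
        norm_elementaryFactor_sub_one_le (hdiv.trans hone)
    _ ≤ Real.exp (3 / 2) * (R * ‖l‖⁻¹) ^ 3 := by gcongr
    _ = Real.exp (3 / 2) * R ^ 3 * ‖l‖⁻¹ ^ 3 := by rw [mul_pow, mul_assoc]

variable (Λ : Submodule ℤ ℂ) [DiscreteTopology Λ]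

lemma eventually_cofinite_le_norm (R : ℝ) : ∀ᶠ l : Λ in cofinite, R ≤ ‖(l : ℂ)‖ :=
  (tendsto_norm_cocompact_atTop.comp
    (Λ.toAddSubgroup.tendsto_coe_cofinite_of_discrete ⟨‹_›⟩)).eventually_ge_atTop R

variable [IsZLattice ℝ Λ]

lemma summable_norm_inv_pow_three : Summable fun l : Λ ↦ ‖(l : ℂ)‖⁻¹ ^ 3 :=
  ZLattice.summable_norm_pow_inv Λ 3 (by
    rw [ZLattice.rank ℝ, Complex.finrank_real_complex]; norm_num)

lemma multipliableLocallyUniformlyOn_elementaryFactor (R : ℝ) :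
    MultipliableLocallyUniformlyOn (fun (l : Λ) z ↦ elementaryFactor (z / l)) (ball 0 R) := by
  have := Summable.multipliableLocallyUniformlyOn_one_add
    (f := fun (l : Λ) z ↦ elementaryFactor (z / l) - 1) isOpen_ball
    ((summable_norm_inv_pow_three Λ).mul_left (Real.exp (3 / 2) * R ^ 3))
    ((eventually_cofinite_le_norm Λ R).mono fun l hl z hz ↦
      norm_elementaryFactor_div_sub_one_le (mem_ball_zero_iff.mp hz).le hl)
    fun l ↦ ((differentiable_elementaryFactor_div l).sub_const 1).continuous.continuousOn
  simpa only [add_sub_cancel] using this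

lemma differentiable_latticeProduct : Differentiable ℂ (latticeProduct Λ) := fun z ↦
  ((multipliableLocallyUniformlyOn_elementaryFactor Λ (‖z‖ + 1)).hasProdLocallyUniformlyOn
    |>.differentiableOn (.of_forall fun _ ↦ DifferentiableOn.fun_finsetProd fun l _ ↦
      (differentiable_elementaryFactor_div l).differentiableOn) isOpen_ball).differentiableAt
    (isOpen_ball.mem_nhds (by simp))

variable {Λ}

lemma latticeProduct_ne_zero {z : ℂ} (hz : z ∉ Λ) : latticeProduct Λ z ≠ 0 := by
  have := tprod_one_add_ne_zero_of_summable (f := fun l : Λ ↦ elementaryFactor (z / l) - 1)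
    (fun l ↦ by
      rw [add_sub_cancel]
      exact elementaryFactor_div_ne_zero (ne_of_mem_of_not_mem l.2 hz).symm)
    (.of_norm_bounded_eventually ((summable_norm_inv_pow_three Λ).mul_left _)
      ((eventually_cofinite_le_norm Λ ‖z‖).mono fun l hl ↦ by
        rw [norm_norm]
        exact norm_elementaryFactor_div_sub_one_le le_rfl hl))
  simpa only [add_sub_cancel, latticeProduct] using this

lemma latticeProduct_eq_zero_iff {z : ℂ} (hz : z ≠ 0) : latticeProduct Λ z = 0 ↔ z ∈ Λ := by
  refine ⟨fun h ↦ by_contra fun hmem ↦ latticeProduct_ne_zero hmem h, fun hmem ↦ ?_⟩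
  refine tprod_of_exists_eq_zero ⟨⟨z, hmem⟩, ?_⟩
  rw [elementaryFactor_eq_zero_iff, div_self hz]

lemma hasSum_logDeriv_latticeProduct {z : ℂ} (hz : z ∉ Λ) :
    HasSum (fun l : Λ ↦ logDeriv (fun x ↦ elementaryFactor (x / l)) z)
      (logDeriv (latticeProduct Λ) z) := by
  have hprod :=
    (multipliableLocallyUniformlyOn_elementaryFactor Λ (‖z‖ + 1)).hasProdLocallyUniformlyOn
  refine (Complex.logDeriv_tendsto isOpen_ball (by simp) hprod (.of_forall fun _ ↦
    DifferentiableOn.fun_finsetProd fun l _ ↦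
      (differentiable_elementaryFactor_div l).differentiableOn)
    (latticeProduct_ne_zero hz)).congr fun s ↦ ?_
  exact logDeriv_prod (fun l _ ↦ elementaryFactor_div_ne_zero (ne_of_mem_of_not_mem l.2 hz).symm)
    fun l _ ↦ differentiable_elementaryFactor_div l z

end LatticeProduct

section Liouville

open Filter
open scoped Topology

variable {F D : ℂ → ℂ}

lemma differentiable_dslope (hF : Differentiable ℂ F) (x : ℂ) : Differentiable ℂ (dslope F x) :=
  differentiableOn_univ.mp ((Complex.differentiableOn_dslope univ_mem).mpr hF.differentiableOn)

lemma dense_ne_zero_of_simple_zeros (hD : Differentiable ℂ D)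
    (hsimple : ∀ z, D z = 0 → deriv D z ≠ 0) : Dense {z | D z ≠ 0} := by
  intro x
  by_cases hx : D x = 0
  · refine mem_closure_iff_frequently.mpr (Eventually.frequently ?_ |>.filter_mono
      (nhdsWithin_le_nhds (s := {x}ᶜ)))
    exact (hD x).hasDerivAt.eventually_ne (hsimple x hx)
  · exact subset_closure hx

lemma exists_entire_eq_mul (hF : Differentiable ℂ F) (hD : Differentiable ℂ D)
    (hzero : ∀ z, D z = 0 → F z = 0) (hsimple : ∀ z, D z = 0 → deriv D z ≠ 0) :
    ∃ G : ℂ → ℂ, Differentiable ℂ G ∧ ∀ z, F z = G z * D z := by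
  classical
  let G : ℂ → ℂ := fun z ↦ if D z = 0 then deriv F z / deriv D z else F z / D z
  refine ⟨G, fun x ↦ ?_, fun z ↦ ?_⟩
  · by_cases hx : D x = 0
    · have hx' : dslope D x x ≠ 0 := by rw [dslope_same]; exact hsimple x hx
      have hquot := (differentiable_dslope hF x x).fun_div (differentiable_dslope hD x x) hx'
      refine hquot.congr_of_eventuallyEq ?_
      filter_upwards [(differentiable_dslope hD x).continuous.continuousAt.eventually_ne hx']
        with y hy
      rcases eq_or_ne y x with rfl | hyx
      · simp [G, hx]
      · rw [dslope_of_ne _ hyx, slope_def_field, hx, sub_zero] at hy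
        have hDy : D y ≠ 0 := fun h ↦ hy (by rw [h, zero_div])
        rw [dslope_of_ne _ hyx, dslope_of_ne _ hyx, slope_def_field, slope_def_field, hx,
          hzero x hx, sub_zero, sub_zero, div_div_div_cancel_right₀ (sub_ne_zero.mpr hyx)]
        exact if_neg hDy
    · refine ((hF x).fun_div (hD x) hx).congr_of_eventuallyEq ?_
      filter_upwards [hD.continuous.continuousAt.eventually_ne hx] with y hy
      exact if_neg hy
  · by_cases hz : D z = 0
    · rw [hz, mul_zero, hzero z hz]
    · simp only [G, if_neg hz, div_mul_cancel₀ _ hz]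

lemma exists_eq_const_mul_of_quasiperiodic (Λ : Submodule ℤ ℂ) [DiscreteTopology Λ]
    [IsZLattice ℝ Λ] (hF : Differentiable ℂ F) (hD : Differentiable ℂ D)
    (hzero : ∀ z, D z = 0 → F z = 0) (hsimple : ∀ z, D z = 0 → deriv D z ≠ 0)
    (hquasi : ∀ w ∈ Λ, ∃ m : ℂ → ℂ, (∀ z, m z ≠ 0) ∧
      (∀ z, F (z + w) = m z * F z) ∧ ∀ z, D (z + w) = m z * D z) :
    ∃ k : ℂ, ∀ z, F z = k * D z := by
  obtain ⟨G, hG, hFG⟩ := exists_entire_eq_mul hF hD hzero hsimple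
  have hperiodic : ∀ z w, w ∈ Λ → G (z + w) = G z := by
    intro z w hw
    obtain ⟨m, hm, hmF, hmD⟩ := hquasi w hw
    refine congrFun (Continuous.ext_on (dense_ne_zero_of_simple_zeros hD hsimple)
      (hG.continuous.comp (continuous_add_const w)) hG.continuous fun y (hy : D y ≠ 0) ↦ ?_) z
    change G (y + w) = G y
    refine mul_right_cancel₀ (mul_ne_zero (hm y) hy) ?_
    rw [← hmD, ← hFG, hmF, hmD, hFG]
    ring
  have hbounded := (IsZLattice.isCompact_range_of_periodic Λ G hG.continuous hperiodic).isBounded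
  exact ⟨G 0, fun z ↦ by rw [hFG, hG.apply_eq_apply_of_bounded hbounded z 0]⟩

end Liouville

namespace EllLattice

open Filter
open scoped Topology

/-- The lattice as a Mathlib period pair, which gives access to the Mathlib function `℘`. -/
def periodPair (L : EllLattice) : PeriodPair where
  ω₁ := L.ω₁
  ω₂ := L.ω₂
  indep := LinearIndependent.pair_iff.mpr L.indep

/-- The lattice as a `ℤ`-submodule of `ℂ`. -/
abbrev lattice (L : EllLattice) : Submodule ℤ ℂ := L.periodPair.lattice

variable (L : EllLattice)

lemma mem_iff_mem_lattice {z : ℂ} : L.mem z ↔ z ∈ L.lattice := by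
  simp only [mem, PeriodPair.mem_lattice, periodPair, zsmul_eq_mul, eq_comm]

lemma countable_lattice : (L.lattice : Set ℂ).Countable :=
  Set.countable_coe_iff.mp <|
    L.periodPair.latticeEquivProd.toEquiv.countable_iff.mpr inferInstance

lemma tprod_lattice_eq_tprod_per (f : ℂ → ℂ) :
    ∏' l : L.lattice, f l = ∏' p : ℤ × ℤ, f (L.per p) := by
  rw [← L.periodPair.latticeEquivProd.symm.toEquiv.tprod_eq]
  refine tprod_congr fun p ↦ congrArg f ?_
  exact (L.periodPair.latticeEquiv_symm_apply p).trans (by simp [per, periodPair])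

lemma sigma_eq_mul_latticeProduct (z : ℂ) : L.sigma z = z * latticeProduct L.lattice z := by
  have hsupport : (Function.mulSupport fun p : ℤ × ℤ ↦ elementaryFactor (z / L.per p)) ⊆
      {p | p ≠ 0} := by
    rintro p hp rfl
    exact hp (by simp [per, elementaryFactor_zero])
  rw [sigma, latticeProduct, L.tprod_lattice_eq_tprod_per fun l ↦ elementaryFactor (z / l),
    ← tprod_subtype_eq_of_mulSupport_subset hsupport]
  congr 1
  refine tprod_congr fun p ↦ ?_
  rw [elementaryFactor, div_pow, div_div, mul_comm 2]

lemma differentiable_sigma : Differentiable ℂ L.sigma := by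
  rw [funext L.sigma_eq_mul_latticeProduct]
  exact differentiable_id.mul (differentiable_latticeProduct L.lattice)

lemma sigma_eq_zero_iff {z : ℂ} : L.sigma z = 0 ↔ z ∈ L.lattice := by
  rw [sigma_eq_mul_latticeProduct]
  rcases eq_or_ne z 0 with rfl | hz
  · simp
  · rw [mul_eq_zero_iff_left hz, latticeProduct_eq_zero_iff hz]

lemma sigma_neg (z : ℂ) : L.sigma (-z) = -L.sigma z := by
  simp only [sigma_eq_mul_latticeProduct, latticeProduct_neg, neg_mul]

lemma deriv_sigma_zero : deriv L.sigma 0 = 1 := by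
  rw [funext L.sigma_eq_mul_latticeProduct, deriv_fun_mul differentiableAt_fun_id
    (differentiable_latticeProduct L.lattice 0), latticeProduct_zero]
  simp

lemma zeta_eq_logDeriv (z : ℂ) : L.zeta z = logDeriv L.sigma z := rfl

lemma hasDerivAt_sigma {z : ℂ} (hz : L.sigma z ≠ 0) :
    HasDerivAt L.sigma (L.zeta z * L.sigma z) z := by
  rw [zeta, div_mul_cancel₀ _ hz]
  exact (L.differentiable_sigma z).hasDerivAt

variable {L}

lemma hasSum_zeta {z : ℂ} (hz : z ∉ L.lattice) :
    HasSum (fun l : L.lattice ↦ 1 / (z - l) + 1 / l + z / l ^ 2) (L.zeta z) := by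
  have hz0 : z ≠ 0 := fun h ↦ hz (h ▸ zero_mem _)
  have hzeta : L.zeta z = 1 / z + logDeriv (latticeProduct L.lattice) z := by
    rw [zeta_eq_logDeriv, funext L.sigma_eq_mul_latticeProduct,
      logDeriv_mul z hz0 (latticeProduct_ne_zero hz) differentiableAt_fun_id
        (differentiable_latticeProduct L.lattice z), logDeriv_apply, deriv_id'']
  rw [hzeta]
  refine ((hasSum_ite_eq 0 (1 / z)).add (hasSum_logDeriv_latticeProduct hz)).congr_fun fun l ↦ ?_
  by_cases hl : l = 0
  · simp [hl, elementaryFactor_zero]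
  · have hl' : (l : ℂ) ≠ 0 := by simpa using hl
    rw [if_neg hl, zero_add, logDeriv_elementaryFactor_div hl'
      (ne_of_mem_of_not_mem l.2 hz).symm]

lemma hasDerivAt_zeta {z : ℂ} (hz : z ∉ L.lattice) :
    HasDerivAt L.zeta (-L.periodPair.weierstrassP z) z := by
  have hsummand (l : L.lattice) {x : ℂ} (hx : x ∉ L.lattice) :
      HasDerivAt (fun x : ℂ ↦ 1 / (x - l) + 1 / l + x / l ^ 2)
        (-(1 / (x - l) ^ 2 - 1 / l ^ 2)) x := by
    have hxl : x - l ≠ 0 := sub_ne_zero.mpr fun h ↦ hx (h ▸ l.2)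
    have hpole := ((hasDerivAt_id' x).sub_const (l : ℂ)).fun_inv hxl
    simp only [one_div]
    exact ((hpole.add_const _).fun_add ((hasDerivAt_id' x).div_const _)).congr_deriv (by ring)
  have hderiv := L.periodPair.hasSumLocallyUniformly_weierstrassP.tendstoLocallyUniformlyOn
    (s := (L.lattice : Set ℂ)ᶜ) |>.neg
  refine hasDerivAt_of_tendstoLocallyUniformlyOn L.periodPair.isClosed_lattice.isOpen_compl
    hderiv (.of_forall fun s x hx ↦ ?_) (fun x hx ↦ hasSum_zeta hx) hz
  exact (HasDerivAt.fun_sum fun l _ ↦ hsummand l hx).congr_deriv (by simp)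

lemma exists_forall_eq_of_hasDerivAt_zero {f : ℂ → ℂ}
    (hf : ∀ z ∉ L.lattice, HasDerivAt f 0 z) : ∃ c, ∀ z ∉ L.lattice, f z = c :=
  L.periodPair.isClosed_lattice.isOpen_compl.exists_is_const_of_deriv_eq_zero
    (L.countable_lattice.isConnected_compl_of_one_lt_rank (by simp)).isPreconnected
    (fun z hz ↦ (hf z hz).differentiableAt.differentiableWithinAt) fun z hz ↦ (hf z hz).deriv

lemma add_notMem_lattice {z w : ℂ} (hz : z ∉ L.lattice) (hw : w ∈ L.lattice) :
    z + w ∉ L.lattice := by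
  rwa [Submodule.add_mem_iff_left _ hw]

lemma sigma_ne_zero_of_notMem {z : ℂ} (hz : z ∉ L.lattice) : L.sigma z ≠ 0 :=
  L.sigma_eq_zero_iff.not.mpr hz

lemma exists_zeta_add_eq {w : ℂ} (hw : w ∈ L.lattice) :
    ∃ η, ∀ z ∉ L.lattice, L.zeta (z + w) - L.zeta z = η :=
  exists_forall_eq_of_hasDerivAt_zero fun z hz ↦
    (((hasDerivAt_zeta (add_notMem_lattice hz hw)).comp_add_const z w).fun_sub
      (hasDerivAt_zeta hz)).congr_deriv (by
        rw [L.periodPair.weierstrassP_add_coe z ⟨w, hw⟩, sub_self])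

lemma exists_sigma_add_eq {w : ℂ} (hw : w ∈ L.lattice) :
    ∃ c η : ℂ, c ≠ 0 ∧ ∀ z, L.sigma (z + w) = c * Complex.exp (η * z) * L.sigma z := by
  obtain ⟨η, hη⟩ := exists_zeta_add_eq hw
  obtain ⟨c, hc⟩ : ∃ c, ∀ z ∉ L.lattice,
      L.sigma (z + w) * Complex.exp (-(η * z)) / L.sigma z = c := by
    refine exists_forall_eq_of_hasDerivAt_zero fun z hz ↦ ?_
    have hshift := (L.hasDerivAt_sigma (sigma_ne_zero_of_notMem
      (add_notMem_lattice hz hw))).comp_add_const z w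
    have hexp := ((hasDerivAt_id' z).const_mul η).fun_neg.cexp
    have hσ := sigma_ne_zero_of_notMem hz
    refine ((hshift.mul hexp).div (L.hasDerivAt_sigma hσ) hσ).congr_deriv ?_
    rw [← hη z hz]
    simp only [Pi.mul_apply]
    ring
  have hform (z : ℂ) : L.sigma (z + w) = c * Complex.exp (η * z) * L.sigma z := by
    by_cases hz : z ∈ L.lattice
    · rw [L.sigma_eq_zero_iff.mpr hz, L.sigma_eq_zero_iff.mpr (add_mem hz hw), mul_zero]
    · rw [← hc z hz, Complex.exp_neg]
      have hσ := sigma_ne_zero_of_notMem hz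
      field_simp
  refine ⟨c, η, ?_, hform⟩
  rintro rfl
  refine sigma_ne_zero_of_notMem (add_notMem_lattice L.periodPair.ω₁_div_two_notMem_lattice hw) ?_
  rw [hform, zero_mul, zero_mul]

lemma deriv_sigma_ne_zero {w : ℂ} (hw : w ∈ L.lattice) : deriv L.sigma w ≠ 0 := by
  obtain ⟨c, η, hc, hform⟩ := exists_sigma_add_eq hw
  have hexp := (((hasDerivAt_id' (0 : ℂ)).const_mul η).cexp.const_mul c).fun_mul
    (L.differentiable_sigma 0).hasDerivAt
  have hshift := (L.differentiable_sigma (0 + w)).hasDerivAt.comp_add_const 0 w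
  rw [funext hform] at hshift
  have := hshift.unique hexp
  rw [zero_add, L.sigma_eq_zero_iff.mpr (zero_mem _), deriv_sigma_zero] at this
  simpa [this] using hc

variable (L)

/-- The product `σ(z + a) σ(z - a)`, equal to `σ(z)² σ(a)² (℘(a) - ℘(z))`. All such products, for
`z` varying and `a` fixed, share the same multipliers under `z ↦ z + w`. -/
def sigmaPair (z a : ℂ) : ℂ := L.sigma (z + a) * L.sigma (z - a)

lemma sigmaPair_swap (z a : ℂ) : L.sigmaPair a z = -L.sigmaPair z a := by
  rw [sigmaPair, sigmaPair, add_comm a z, ← neg_sub z a, sigma_neg, mul_neg]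

lemma sigmaPair_neg_left (z a : ℂ) : L.sigmaPair (-z) a = L.sigmaPair z a := by
  rw [sigmaPair, sigmaPair, show -z + a = -(z - a) by ring, show -z - a = -(z + a) by ring,
    sigma_neg, sigma_neg]
  ring

lemma sigmaPair_self (z : ℂ) : L.sigmaPair z z = 0 := by
  rw [sigmaPair, sub_self, L.sigma_eq_zero_iff.mpr (zero_mem _), mul_zero]

lemma differentiable_sigmaPair (a : ℂ) : Differentiable ℂ fun z ↦ L.sigmaPair z a :=
  (L.differentiable_sigma.comp (differentiable_id.add_const a)).mul
    (L.differentiable_sigma.comp (differentiable_id.sub_const a))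

variable {L}

lemma exists_sigmaPair_add_eq {w : ℂ} (hw : w ∈ L.lattice) :
    ∃ m : ℂ → ℂ, (∀ z, m z ≠ 0) ∧ ∀ z a, L.sigmaPair (z + w) a = m z * L.sigmaPair z a := by
  obtain ⟨c, η, hc, hσ⟩ := exists_sigma_add_eq hw
  refine ⟨fun z ↦ c ^ 2 * Complex.exp (2 * η * z),
    fun z ↦ mul_ne_zero (pow_ne_zero 2 hc) (Complex.exp_ne_zero _), fun z a ↦ ?_⟩
  have hexp : Complex.exp (2 * η * z) =
      Complex.exp (η * (z + a)) * Complex.exp (η * (z - a)) := by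
    rw [← Complex.exp_add]; congr 1; ring
  rw [sigmaPair, sigmaPair, add_right_comm, add_sub_right_comm, hσ, hσ]
  simp only [hexp]
  ring

lemma sigmaPair_eq_zero_iff {z a : ℂ} :
    L.sigmaPair z a = 0 ↔ z + a ∈ L.lattice ∨ z - a ∈ L.lattice := by
  rw [sigmaPair, mul_eq_zero, L.sigma_eq_zero_iff, L.sigma_eq_zero_iff]

lemma deriv_sigmaPair_ne_zero {z a : ℂ} (ha : 2 * a ∉ L.lattice) (hz : L.sigmaPair z a = 0) :
    deriv (fun z ↦ L.sigmaPair z a) z ≠ 0 := by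
  have hderiv : HasDerivAt (fun z ↦ L.sigmaPair z a)
      (deriv L.sigma (z + a) * L.sigma (z - a) + L.sigma (z + a) * deriv L.sigma (z - a)) z :=
    ((L.differentiable_sigma (z + a)).hasDerivAt.comp_add_const z a).mul
      ((L.differentiable_sigma (z - a)).hasDerivAt.comp_sub_const z a)
  have hdiff : z + a - (z - a) ∉ L.lattice := by rwa [show z + a - (z - a) = 2 * a by ring]
  rw [hderiv.deriv]
  rcases sigmaPair_eq_zero_iff.mp hz with h | h
  · rw [L.sigma_eq_zero_iff.mpr h, zero_mul, add_zero]
    exact mul_ne_zero (deriv_sigma_ne_zero h)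
      (sigma_ne_zero_of_notMem fun h' ↦ hdiff (sub_mem h h'))
  · rw [L.sigma_eq_zero_iff.mpr h, mul_zero, zero_add]
    exact mul_ne_zero (sigma_ne_zero_of_notMem fun h' ↦ hdiff (sub_mem h' h))
      (deriv_sigma_ne_zero h)

lemma sigmaPair_plucker_of_notMem (z : ℂ) {a b : ℂ} (c : ℂ) (ha : 2 * a ∉ L.lattice)
    (hab : L.sigmaPair b a ≠ 0) :
    L.sigmaPair z a * L.sigmaPair b c + L.sigmaPair z b * L.sigmaPair c a +
      L.sigmaPair z c * L.sigmaPair a b = 0 := by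
  let F (z : ℂ) : ℂ := L.sigmaPair z b * L.sigmaPair c a + L.sigmaPair z c * L.sigmaPair a b
  have hFquasi : ∀ w ∈ L.lattice, ∃ m : ℂ → ℂ, (∀ z, m z ≠ 0) ∧
      (∀ z, F (z + w) = m z * F z) ∧ ∀ z, L.sigmaPair (z + w) a = m z * L.sigmaPair z a := by
    intro w hw
    obtain ⟨m, hm, hpair⟩ := exists_sigmaPair_add_eq hw
    exact ⟨m, hm, fun z ↦ by simp only [F, hpair]; ring, fun z ↦ hpair z a⟩
  have hFa : F a = 0 := by
    simp only [F, L.sigmaPair_swap a c]; ring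
  have hFneg : F (-a) = 0 := by
    simp only [F, sigmaPair_neg_left] at hFa ⊢; exact hFa
  have hFzero (z : ℂ) (hz : L.sigmaPair z a = 0) : F z = 0 := by
    rcases sigmaPair_eq_zero_iff.mp hz with h | h
    · obtain ⟨m, -, hF, -⟩ := hFquasi _ h
      simpa [hFneg] using hF (-a)
    · obtain ⟨m, -, hF, -⟩ := hFquasi _ h
      simpa [hFa] using hF a
  obtain ⟨k, hk⟩ := exists_eq_const_mul_of_quasiperiodic (F := F) L.lattice
    (((L.differentiable_sigmaPair b).mul_const _).add ((L.differentiable_sigmaPair c).mul_const _))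
    (L.differentiable_sigmaPair a) hFzero (fun z hz ↦ deriv_sigmaPair_ne_zero ha hz) hFquasi
  have hk_eq : k = -L.sigmaPair b c := by
    refine mul_right_cancel₀ hab ?_
    rw [← hk b]
    simp only [F, L.sigmaPair_self, L.sigmaPair_swap b a]
    ring
  have := hk z
  simp only [F] at this
  linear_combination this + L.sigmaPair z a * hk_eq

-- Writing `σ(z + a) σ(z - a)` as a `2 × 2` determinant in `σ²` and `σ² ℘` makes this a Plücker
-- relation.
lemma sigmaPair_plucker (z a b c : ℂ) :
    L.sigmaPair z a * L.sigmaPair b c + L.sigmaPair z b * L.sigmaPair c a +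
      L.sigmaPair z c * L.sigmaPair a b = 0 := by
  have hdense : Dense ((fun a : ℂ ↦ 2 * a) ⁻¹' L.lattice ∪ (fun a ↦ b + a) ⁻¹' L.lattice ∪
      (fun a ↦ b - a) ⁻¹' L.lattice)ᶜ :=
    Set.Countable.dense_compl ℝ
      (((L.countable_lattice.preimage (mul_right_injective₀ two_ne_zero)).union
        (L.countable_lattice.preimage (add_right_injective b))).union
        (L.countable_lattice.preimage (sub_right_injective)))
  have hσ := L.differentiable_sigma.continuous
  refine congrFun (Continuous.ext_on hdense (f := fun a ↦ L.sigmaPair z a * L.sigmaPair b c +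
    L.sigmaPair z b * L.sigmaPair c a + L.sigmaPair z c * L.sigmaPair a b) (g := fun _ ↦ 0)
    (by unfold sigmaPair; fun_prop) continuous_const fun a ha ↦ ?_) a
  simp only [Set.mem_compl_iff, Set.mem_union, Set.mem_preimage, SetLike.mem_coe, not_or] at ha
  exact sigmaPair_plucker_of_notMem z c ha.1.1
    (sigmaPair_eq_zero_iff.not.mpr (not_or.mpr ⟨ha.1.2, ha.2⟩))

lemma sigma_three_term (x d k b : ℂ) :
    L.sigma (x + k + b) * L.sigma (x + d) * L.sigma (d + b) * L.sigma k =
      L.sigma (x + d + b) * L.sigma (x + k) * L.sigma (k + b) * L.sigma d -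
        L.sigma (x + d + k + b) * L.sigma x * L.sigma b * L.sigma (d - k) := by
  have hplucker := L.sigmaPair_plucker (x + (k + d + b) / 2) ((k + d + b) / 2)
    ((k + b - d) / 2) ((d + b - k) / 2)
  have hd : L.sigma (k - d) = -L.sigma (d - k) := by rw [← sigma_neg, neg_sub]
  simp only [sigmaPair] at hplucker
  ring_nf at hplucker hd ⊢
  simp only [hd, sigma_neg] at hplucker
  linear_combination -hplucker

lemma sigma_three_term_add (ξ α β t : ℂ) :
    L.sigma (ξ + α) * L.sigma (α + β) * (L.sigma (ξ + β + t) * L.sigma t) =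
      L.sigma α * L.sigma (ξ + α + β) * (L.sigma (β + t) * L.sigma (ξ + t)) -
        L.sigma β * L.sigma ξ * (L.sigma (α - t) * L.sigma (ξ + α + β + t)) := by
  have hthree := L.sigma_three_term (-(ξ + α)) (ξ + t) ξ (α + β)
  have hα_sub : L.sigma (t - α) = -L.sigma (α - t) := by rw [← sigma_neg, neg_sub]
  rw [show -(ξ + α) + ξ + (α + β) = β by ring, show -(ξ + α) + (ξ + t) = t - α by ring,
    show ξ + t + (α + β) = ξ + α + β + t by ring, show t - α + (α + β) = β + t by ring,
    show -(ξ + α) + ξ = -α by ring, show ξ + (α + β) = ξ + α + β by ring,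
    show t - α + ξ + (α + β) = ξ + β + t by ring, show ξ + t - ξ = t by ring,
    hα_sub, sigma_neg, sigma_neg] at hthree
  linear_combination -hthree

-- Both sides of `sigma_three_term_add` vanish at `t = 0`; this is the equality of their
-- derivatives there.
lemma sigma_mul_sigma_mul_sigma_eq_chi {ξ α β : ℂ} (hξ : L.sigma ξ ≠ 0) (hα : L.sigma α ≠ 0)
    (hβ : L.sigma β ≠ 0) (hξαβ : L.sigma (ξ + α + β) ≠ 0) :
    L.sigma (ξ + α) * L.sigma (ξ + β) * L.sigma (α + β) =
      L.sigma ξ * L.sigma α * L.sigma β * L.sigma (ξ + α + β) * L.chi α β ξ := by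
  have hσ_add {a : ℂ} (ha : L.sigma a ≠ 0) :
      HasDerivAt (fun t ↦ L.sigma (a + t)) (L.zeta a * L.sigma a) 0 :=
    HasDerivAt.comp_const_add a 0 (by simpa using L.hasDerivAt_sigma ha)
  have hσ_sub : HasDerivAt (fun t ↦ L.sigma (α - t)) (-(L.zeta α * L.sigma α)) 0 :=
    HasDerivAt.comp_const_sub α 0 (by simpa using L.hasDerivAt_sigma hα)
  have hσ_vanishing : HasDerivAt (fun t ↦ L.sigma (ξ + β + t) * L.sigma t)
      (L.sigma (ξ + β)) 0 := by
    have hξβ : HasDerivAt (fun t ↦ L.sigma (ξ + β + t)) _ 0 :=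
      (L.differentiable_sigma _).hasDerivAt.comp_const_add _ _
    refine (hξβ.fun_mul (L.differentiable_sigma 0).hasDerivAt).congr_deriv ?_
    rw [L.sigma_eq_zero_iff.mpr (zero_mem _), deriv_sigma_zero, add_zero]
    ring
  have hleft := hσ_vanishing.const_mul (L.sigma (ξ + α) * L.sigma (α + β))
  have hright := (((hσ_add hβ).fun_mul (hσ_add hξ)).const_mul
    (L.sigma α * L.sigma (ξ + α + β))).fun_sub
    ((hσ_sub.fun_mul (hσ_add hξαβ)).const_mul (L.sigma β * L.sigma ξ))
  rw [funext (L.sigma_three_term_add ξ α β)] at hleft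
  have := hleft.unique hright
  simp only [add_zero, sub_zero] at this
  rw [chi]
  linear_combination this

lemma Phi_comm (ξ κ : ℂ) : L.Phi ξ κ = L.Phi κ ξ := by
  rw [Phi, Phi, add_comm, mul_comm (L.sigma ξ)]

lemma Phi_ne_zero {ξ κ : ℂ} (hξ : L.sigma ξ ≠ 0) (hκ : L.sigma κ ≠ 0)
    (hξκ : L.sigma (ξ + κ) ≠ 0) : L.Phi ξ κ ≠ 0 :=
  div_ne_zero hξκ (mul_ne_zero hξ hκ)

lemma exp_zeta_mul_mul_Psi (ξ κ : ℂ) : Complex.exp (L.zeta ξ * κ) * L.Psi ξ κ = L.Phi ξ κ := by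
  rw [Psi, mul_left_comm, ← Complex.exp_add, neg_mul, add_neg_cancel, Complex.exp_zero, mul_one]

lemma Phi_mul_Phi {ξ α β : ℂ} (hξ : L.sigma ξ ≠ 0) (hα : L.sigma α ≠ 0) (hβ : L.sigma β ≠ 0)
    (hαβ : L.sigma (α + β) ≠ 0) (hξαβ : L.sigma (ξ + α + β) ≠ 0) :
    L.Phi ξ α * L.Phi ξ β = L.chi α β ξ * L.Phi ξ (α + β) := by
  have := sigma_mul_sigma_mul_sigma_eq_chi hξ hα hβ hξαβ
  rw [Phi, Phi, Phi, ← add_assoc]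
  field_simp
  linear_combination this

lemma Phi_fay {x d k b : ℂ} (hx : L.sigma x ≠ 0) (hd : L.sigma d ≠ 0) (hk : L.sigma k ≠ 0)
    (hb : L.sigma b ≠ 0) (hkb : L.sigma (k + b) ≠ 0) (hxd : L.sigma (x + d) ≠ 0) :
    L.Phi x (k + b) * L.Phi d b =
      L.Phi x k * L.Phi (x + d) b + L.Phi (x + d) (k + b) * L.Phi d (-k) := by
  have := L.sigma_three_term x d k b
  simp only [Phi, ← add_assoc, ← sub_eq_add_neg, sigma_neg]
  field_simp
  linear_combination this

end EllLattice

section Dressing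

variable {A m n : Type*} [CommRing A] [Fintype m] [DecidableEq m] [Fintype n]

/-- The pairing `sᵀ C (1 + M C)⁻¹ a`, in terms of which `w₀` and the gauge variables are written. -/
def dressedPairing (M : Matrix m n A) (C : Matrix n m A) (s : n → A) (a : m → A) : A :=
  s ⬝ᵥ (C *ᵥ ((1 + M * C)⁻¹ *ᵥ a))

lemma dressedPairing_smul_right (M : Matrix m n A) (C : Matrix n m A) (c : A) (s : n → A)
    (a : m → A) : dressedPairing M C s (c • a) = c * dressedPairing M C s a := by
  simp only [dressedPairing, mulVec_smul, dotProduct_smul, smul_eq_mul]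

lemma dressedPairing_sub_right (M : Matrix m n A) (C : Matrix n m A) (s : n → A)
    (a b : m → A) :
    dressedPairing M C s (a - b) = dressedPairing M C s a - dressedPairing M C s b := by
  simp only [dressedPairing, mulVec_sub, dotProduct_sub]

lemma dressedPairing_smul_left (M : Matrix m n A) (C : Matrix n m A) (c : A) (s : n → A)
    (a : m → A) : dressedPairing M C (c • s) a = c * dressedPairing M C s a := by
  simp only [dressedPairing, smul_dotProduct, smul_eq_mul]

lemma dressedPairing_sub_left (M : Matrix m n A) (C : Matrix n m A) (s t : n → A)
    (a : m → A) :
    dressedPairing M C (s - t) a = dressedPairing M C s a - dressedPairing M C t a := by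
  simp only [dressedPairing, sub_dotProduct]

lemma dressedPairing_sub_vecMulVec {M : Matrix m n A} {C : Matrix n m A} {r : m → A} {s : n → A}
    (hM : IsUnit (1 + M * C).det) (hM' : IsUnit (1 + (M - vecMulVec r s) * C).det)
    (t : n → A) (a : m → A) :
    dressedPairing (M - vecMulVec r s) C t a =
      dressedPairing M C t a +
        dressedPairing (M - vecMulVec r s) C s a * dressedPairing M C t r := by
  let x := (1 + (M - vecMulVec r s) * C)⁻¹ *ᵥ a
  have hsolves : (1 + M * C) *ᵥ x = a + (s ⬝ᵥ (C *ᵥ x)) • r := by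
    have hx : (1 + (M - vecMulVec r s) * C) *ᵥ x = a := by
      rw [mulVec_mulVec, mul_nonsing_inv _ hM', one_mulVec]
    have hsplit : 1 + M * C = 1 + (M - vecMulVec r s) * C + vecMulVec r s * C := by
      rw [Matrix.sub_mul]; abel
    rw [hsplit, add_mulVec, hx, ← mulVec_mulVec, vecMulVec_mulVec, op_smul_eq_smul]
  have hx : x = (1 + M * C)⁻¹ *ᵥ a + (s ⬝ᵥ (C *ᵥ x)) • ((1 + M * C)⁻¹ *ᵥ r) := by
    rw [← mulVec_smul, ← mulVec_add, ← hsolves, mulVec_mulVec, nonsing_inv_mul _ hM, one_mulVec]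
  have hpair := congrArg (fun v ↦ t ⬝ᵥ (C *ᵥ v)) hx
  simp only [mulVec_add, mulVec_smul, dotProduct_add, dotProduct_smul, smul_eq_mul] at hpair
  exact hpair

lemma inv_one_add_mul_mul_comm [DecidableEq n] {M : Matrix m n A} {C : Matrix n m A}
    (hM : IsUnit (1 + M * C).det) : (1 + C * M)⁻¹ * C = C * (1 + M * C)⁻¹ := by
  have hM' : IsUnit (1 + C * M).det := by rwa [det_one_add_mul_comm]
  have hcomm : (1 + C * M) * C = C * (1 + M * C) := by
    rw [Matrix.add_mul, Matrix.mul_add, Matrix.one_mul, Matrix.mul_one, Matrix.mul_assoc]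
  calc (1 + C * M)⁻¹ * C = (1 + C * M)⁻¹ * (C * (1 + M * C)) * (1 + M * C)⁻¹ := by
        rw [Matrix.mul_assoc, Matrix.mul_assoc, mul_nonsing_inv _ hM, Matrix.mul_one]
    _ = C * (1 + M * C)⁻¹ := by rw [← hcomm, nonsing_inv_mul_cancel_left _ _ hM']

end Dressing

namespace KPData

variable {N N' P : ℕ} {D : KPData N N'} {extra : Fin P → ℂ}

namespace Generic

variable (hgen : D.Generic extra)

include hgen

lemma sigma_ne_zero (c0 cn cm ch : ℤ) (a : Fin N → ℤ) (b : Fin N' → ℤ) (e : Fin P → ℤ)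
    (hne : ¬ (c0 = 0 ∧ cn = 0 ∧ cm = 0 ∧ ch = 0 ∧ a = 0 ∧ b = 0 ∧ e = 0)) :
    D.L.sigma (c0 • D.xi0 + cn • D.del + cm • D.eps + ch • D.lam +
      (∑ i, a i • D.κ i) + (∑ j, b j • D.κ' j) + ∑ t, e t • extra t) ≠ 0 :=
  EllLattice.sigma_ne_zero_of_notMem <|
    D.L.mem_iff_mem_lattice.not.mp (hgen c0 cn cm ch a b e hne)

lemma sigma_xi_ne_zero (n m h : ℤ) : D.L.sigma (D.xi n m h) ≠ 0 := by
  simpa [xi] using hgen.sigma_ne_zero 1 n m h 0 0 0 (by simp)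

lemma sigma_del_ne_zero : D.L.sigma D.del ≠ 0 := by
  simpa using hgen.sigma_ne_zero 0 1 0 0 0 0 0 (by simp)

lemma sigma_eps_ne_zero : D.L.sigma D.eps ≠ 0 := by
  simpa using hgen.sigma_ne_zero 0 0 1 0 0 0 0 (by simp)

lemma sigma_κ_ne_zero (i : Fin N) : D.L.sigma (D.κ i) ≠ 0 := by
  simpa [Pi.single_apply] using hgen.sigma_ne_zero 0 0 0 0 (Pi.single i 1) 0 0 (by simp)

lemma sigma_κ'_ne_zero (j : Fin N') : D.L.sigma (D.κ' j) ≠ 0 := by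
  simpa [Pi.single_apply] using hgen.sigma_ne_zero 0 0 0 0 0 (Pi.single j 1) 0 (by simp)

lemma sigma_extra_ne_zero (t : Fin P) : D.L.sigma (extra t) ≠ 0 := by
  simpa [Pi.single_apply] using hgen.sigma_ne_zero 0 0 0 0 0 0 (Pi.single t 1) (by simp)

lemma sigma_κ_add_κ'_ne_zero (i : Fin N) (j : Fin N') : D.L.sigma (D.κ i + D.κ' j) ≠ 0 := by
  simpa [Pi.single_apply] using
    hgen.sigma_ne_zero 0 0 0 0 (Pi.single i 1) (Pi.single j 1) 0 (by simp)

lemma sigma_κ_add_extra_ne_zero (i : Fin N) (t : Fin P) : D.L.sigma (D.κ i + extra t) ≠ 0 := by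
  simpa [Pi.single_apply] using
    hgen.sigma_ne_zero 0 0 0 0 (Pi.single i 1) 0 (Pi.single t 1) (by simp)

lemma sigma_xi_add_κ'_ne_zero (n m h : ℤ) (j : Fin N') :
    D.L.sigma (D.xi n m h + D.κ' j) ≠ 0 := by
  simpa [xi, Pi.single_apply] using hgen.sigma_ne_zero 1 n m h 0 (Pi.single j 1) 0 (by simp)

lemma sigma_xi_add_extra_ne_zero (n m h : ℤ) (t : Fin P) :
    D.L.sigma (D.xi n m h + extra t) ≠ 0 := by
  simpa [xi, Pi.single_apply] using hgen.sigma_ne_zero 1 n m h 0 0 (Pi.single t 1) (by simp)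

lemma sigma_xi_add_extra_add_κ_ne_zero (n m h : ℤ) (t : Fin P) (i : Fin N) :
    D.L.sigma (D.xi n m h + extra t + D.κ i) ≠ 0 := by
  rw [add_right_comm]
  simpa [xi, Pi.single_apply] using
    hgen.sigma_ne_zero 1 n m h (Pi.single i 1) 0 (Pi.single t 1) (by simp)

lemma sigma_neg_κ_ne_zero (i : Fin N) : D.L.sigma (-D.κ i) ≠ 0 := by
  rw [EllLattice.sigma_neg]
  exact neg_ne_zero.mpr (hgen.sigma_κ_ne_zero i)

lemma Phi_del_neg_κ_ne_zero (i : Fin N) : D.L.Phi D.del (-D.κ i) ≠ 0 :=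
  EllLattice.Phi_ne_zero hgen.sigma_del_ne_zero (hgen.sigma_neg_κ_ne_zero i) <| by
    simpa [Pi.single_apply] using hgen.sigma_ne_zero 0 1 0 0 (Pi.single i (-1)) 0 0 (by simp)

lemma Phi_eps_neg_κ_ne_zero (i : Fin N) : D.L.Phi D.eps (-D.κ i) ≠ 0 :=
  EllLattice.Phi_ne_zero hgen.sigma_eps_ne_zero (hgen.sigma_neg_κ_ne_zero i) <| by
    simpa [Pi.single_apply] using hgen.sigma_ne_zero 0 0 1 0 (Pi.single i (-1)) 0 0 (by simp)

lemma Phi_del_κ'_ne_zero (j : Fin N') : D.L.Phi D.del (D.κ' j) ≠ 0 :=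
  EllLattice.Phi_ne_zero hgen.sigma_del_ne_zero (hgen.sigma_κ'_ne_zero j) <| by
    simpa [Pi.single_apply] using hgen.sigma_ne_zero 0 1 0 0 0 (Pi.single j 1) 0 (by simp)

lemma Phi_eps_κ'_ne_zero (j : Fin N') : D.L.Phi D.eps (D.κ' j) ≠ 0 :=
  EllLattice.Phi_ne_zero hgen.sigma_eps_ne_zero (hgen.sigma_κ'_ne_zero j) <| by
    simpa [Pi.single_apply] using hgen.sigma_ne_zero 0 0 1 0 0 (Pi.single j 1) 0 (by simp)

end Generic

variable (D)

/-- The plane-wave factor `ρ_i e^{-ζ(ξ) κ_i}`, in which all exponentials cancel. -/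
def reducedρ (i : Fin N) (n m h : ℤ) : ℂ :=
  D.L.Phi D.del (-D.κ i) ^ n * D.L.Phi D.eps (-D.κ i) ^ m * D.L.Phi D.lam (-D.κ i) ^ h * D.ρ0 i

/-- The plane-wave factor `ν_j e^{-ζ(ξ) κ'_j}`, in which all exponentials cancel. -/
def reducedν (j : Fin N') (n m h : ℤ) : ℂ :=
  D.L.Phi D.del (D.κ' j) ^ (-n) * D.L.Phi D.eps (D.κ' j) ^ (-m) *
    D.L.Phi D.lam (D.κ' j) ^ (-h) * D.ν0 j

/-- The vector with entries `ρ_i e^{-ζ(ξ) κ_i} Φ_ξ(κ_i + b)`. At `b = κ'_j` it is a multiple of the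
`j`-th column of `M`, and at `b = α` a multiple of `χ_{α,K}(ξ)⁻¹ r`. -/
def cauchyColumn (b : ℂ) (n m h : ℤ) : Fin N → ℂ :=
  fun i ↦ D.reducedρ i n m h * D.L.Phi (D.xi n m h) (D.κ i + b)

lemma ρ_eq (i : Fin N) (n m h : ℤ) :
    D.ρ i n m h = D.reducedρ i n m h * Complex.exp (D.L.zeta (D.xi n m h) * D.κ i) := by
  have hPsi (x : ℂ) : Complex.exp (-(D.L.zeta x) * D.κ i) * D.L.Psi x (-D.κ i) =
      D.L.Phi x (-D.κ i) := by
    rw [neg_mul_comm, D.L.exp_zeta_mul_mul_Psi]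
  rw [ρ, reducedρ, hPsi, hPsi, hPsi, mul_right_comm]

lemma ν_eq (j : Fin N') (n m h : ℤ) :
    D.ν j n m h = D.reducedν j n m h * Complex.exp (D.L.zeta (D.xi n m h) * D.κ' j) := by
  simp only [ν, reducedν, D.L.exp_zeta_mul_mul_Psi, mul_right_comm]

lemma r_apply (i : Fin N) (n m h : ℤ) :
    D.r n m h i = D.reducedρ i n m h * D.L.Phi (D.xi n m h) (D.κ i) := by
  rw [r, ρ_eq, mul_assoc, D.L.exp_zeta_mul_mul_Psi]

lemma s_apply (j : Fin N') (n m h : ℤ) :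
    D.s n m h j = D.reducedν j n m h * D.L.Phi (D.xi n m h) (D.κ' j) := by
  rw [s, ν_eq, mul_assoc, D.L.exp_zeta_mul_mul_Psi]

lemma M_apply (i : Fin N) (j : Fin N') (n m h : ℤ) :
    D.M n m h i j = D.reducedν j n m h * D.cauchyColumn (D.κ' j) n m h i := by
  rw [M, of_apply, ρ_eq, ν_eq, cauchyColumn, ← D.L.exp_zeta_mul_mul_Psi, mul_add, Complex.exp_add]
  ring

/-- `(n', m', h')` is reached from `(n, m, h)` by a lattice step with parameter `d`: the base point
and the reduced plane-wave factors change accordingly. -/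
structure IsShift (d : ℂ) (n m h n' m' h' : ℤ) : Prop where
  xi_eq : D.xi n' m' h' = D.xi n m h + d
  reducedρ_eq : ∀ i, D.reducedρ i n' m' h' = D.reducedρ i n m h * D.L.Phi d (-D.κ i)
  reducedν_eq : ∀ j, D.reducedν j n m h = D.reducedν j n' m' h' * D.L.Phi d (D.κ' j)

variable {D} {d : ℂ} {n m h n' m' h' : ℤ}

lemma Generic.isShift_del (hgen : D.Generic extra) (n m h : ℤ) :
    D.IsShift D.del n m h (n + 1) m h where
  xi_eq := by simp only [xi, add_smul, one_smul]; ring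
  reducedρ_eq i := by
    simp only [reducedρ, zpow_add_one₀ (hgen.Phi_del_neg_κ_ne_zero i)]; ring
  reducedν_eq j := by
    simp only [reducedν, show -n = -(n + 1) + 1 by ring, zpow_add_one₀ (hgen.Phi_del_κ'_ne_zero j)]
    ring

lemma Generic.isShift_eps (hgen : D.Generic extra) (n m h : ℤ) :
    D.IsShift D.eps n m h n (m + 1) h where
  xi_eq := by simp only [xi, add_smul, one_smul]; ring
  reducedρ_eq i := by
    simp only [reducedρ, zpow_add_one₀ (hgen.Phi_eps_neg_κ_ne_zero i)]; ring
  reducedν_eq j := by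
    simp only [reducedν, show -m = -(m + 1) + 1 by ring, zpow_add_one₀ (hgen.Phi_eps_κ'_ne_zero j)]
    ring

namespace IsShift

lemma cauchyColumn_eq (hshift : D.IsShift d n m h n' m' h') (hgen : D.Generic extra)
    (hd : D.L.sigma d ≠ 0) {b : ℂ} (hb : D.L.sigma b ≠ 0)
    (hκb : ∀ i, D.L.sigma (D.κ i + b) ≠ 0) :
    D.cauchyColumn b n' m' h' =
      D.L.Phi d b • D.cauchyColumn b n m h - D.L.Phi (D.xi n' m' h') b • D.r n m h := by
  ext i
  have hfay := EllLattice.Phi_fay (hgen.sigma_xi_ne_zero n m h) hd (hgen.sigma_κ_ne_zero i) hb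
    (hκb i) (hshift.xi_eq ▸ hgen.sigma_xi_ne_zero n' m' h')
  simp only [Pi.sub_apply, Pi.smul_apply, smul_eq_mul, cauchyColumn, r_apply, hshift.reducedρ_eq,
    hshift.xi_eq]
  linear_combination -D.reducedρ i n m h * hfay

lemma M_eq (hshift : D.IsShift d n m h n' m' h') (hgen : D.Generic extra)
    (hd : D.L.sigma d ≠ 0) : D.M n' m' h' = D.M n m h - vecMulVec (D.r n m h) (D.s n' m' h') := by
  ext i j
  rw [Matrix.sub_apply, vecMulVec_apply, M_apply, M_apply, hshift.cauchyColumn_eq hgen hd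
    (hgen.sigma_κ'_ne_zero j) (hgen.sigma_κ_add_κ'_ne_zero · j), hshift.reducedν_eq, s_apply]
  simp only [Pi.sub_apply, Pi.smul_apply, smul_eq_mul]
  ring

lemma Phi_mul_Phi (hshift : D.IsShift d n m h n' m' h') (hgen : D.Generic extra)
    (hd : D.L.sigma d ≠ 0) {b : ℂ} (hb : D.L.sigma b ≠ 0)
    (hξb : D.L.sigma (D.xi n' m' h' + b) ≠ 0) :
    D.L.Phi d b * D.L.Phi (D.xi n m h) b =
      (D.L.zeta (D.xi n m h) + D.L.zeta d + D.L.zeta b - D.L.zeta (D.xi n' m' h' + b)) *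
        D.L.Phi (D.xi n' m' h') b := by
  have hξ' := hgen.sigma_xi_ne_zero n' m' h'
  rw [hshift.xi_eq] at hξ' hξb ⊢
  have hadd : b + D.xi n m h + d = D.xi n m h + d + b := by ring
  rw [mul_comm, D.L.Phi_comm _ b, D.L.Phi_comm _ b, EllLattice.Phi_mul_Phi hb
    (hgen.sigma_xi_ne_zero n m h) hd hξ' (by rwa [hadd]), D.L.Phi_comm b, EllLattice.chi, hadd]

lemma s_apply (hshift : D.IsShift d n m h n' m' h') (hgen : D.Generic extra)
    (hd : D.L.sigma d ≠ 0) (j : Fin N') :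
    D.s n m h j = (D.L.zeta (D.xi n m h) + D.L.zeta d + D.L.zeta (D.κ' j) -
      D.L.zeta (D.xi n' m' h' + D.κ' j)) * D.s n' m' h' j := by
  have hΦ := hshift.Phi_mul_Phi hgen hd (hgen.sigma_κ'_ne_zero j)
    (hgen.sigma_xi_add_κ'_ne_zero n' m' h' j)
  rw [KPData.s_apply, KPData.s_apply, hshift.reducedν_eq]
  linear_combination D.reducedν j n' m' h' * hΦ

lemma s_sub_s {d₁ d₂ : ℂ} {n₁ m₁ h₁ n₂ m₂ h₂ : ℤ} (hshift₁ : D.IsShift d₁ n₁ m₁ h₁ n' m' h')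
    (hshift₂ : D.IsShift d₂ n₂ m₂ h₂ n' m' h') (hgen : D.Generic extra)
    (hd₁ : D.L.sigma d₁ ≠ 0) (hd₂ : D.L.sigma d₂ ≠ 0) :
    D.s n₁ m₁ h₁ - D.s n₂ m₂ h₂ = (D.L.zeta (D.xi n₁ m₁ h₁) + D.L.zeta d₁ -
      (D.L.zeta (D.xi n₂ m₂ h₂) + D.L.zeta d₂)) • D.s n' m' h' := by
  ext j
  rw [Pi.sub_apply, Pi.smul_apply, smul_eq_mul, hshift₁.s_apply hgen hd₁,
    hshift₂.s_apply hgen hd₂]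
  ring

lemma dressedPairing_cauchyColumn (hshift : D.IsShift d n m h n' m' h')
    (hgen : D.Generic extra) (hd : D.L.sigma d ≠ 0) {b : ℂ} (hb : D.L.sigma b ≠ 0)
    (hκb : ∀ i, D.L.sigma (D.κ i + b) ≠ 0) (hM : IsUnit (1 + D.M n m h * D.C).det)
    (hM' : IsUnit (1 + D.M n' m' h' * D.C).det) (t : Fin N' → ℂ) :
    dressedPairing (D.M n' m' h') D.C t (D.cauchyColumn b n' m' h') =
      D.L.Phi d b * dressedPairing (D.M n m h) D.C t (D.cauchyColumn b n m h) -
        (D.L.Phi (D.xi n' m' h') b -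
          dressedPairing (D.M n' m' h') D.C (D.s n' m' h') (D.cauchyColumn b n' m' h')) *
        dressedPairing (D.M n m h) D.C t (D.r n m h) := by
  have hrank_one := dressedPairing_sub_vecMulVec hM (hshift.M_eq hgen hd ▸ hM') t
    (D.cauchyColumn b n' m' h')
  have hcolumn : dressedPairing (D.M n m h) D.C t (D.cauchyColumn b n' m' h') =
      D.L.Phi d b * dressedPairing (D.M n m h) D.C t (D.cauchyColumn b n m h) -
        D.L.Phi (D.xi n' m' h') b * dressedPairing (D.M n m h) D.C t (D.r n m h) := by
    rw [hshift.cauchyColumn_eq hgen hd hb hκb, dressedPairing_sub_right,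
      dressedPairing_smul_right, dressedPairing_smul_right]
  rw [← hshift.M_eq hgen hd] at hrank_one
  linear_combination hrank_one + hcolumn

end IsShift

lemma Phi_smul_inv_DK_mulVec_r {α : ℂ} (hgen : D.Generic ![α])
    (hχ : ∀ i, D.L.chi α (D.κ i) (D.xi n m h) ≠ 0) :
    D.L.Phi (D.xi n m h) α • ((D.DK α n m h)⁻¹ *ᵥ D.r n m h) = D.cauchyColumn α n m h := by
  have hDK : IsUnit (D.DK α n m h).det := by
    rw [DK, det_diagonal]
    exact isUnit_iff_ne_zero.mpr (Finset.prod_ne_zero_iff.mpr fun i _ ↦ hχ i)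
  have hcolumn : D.DK α n m h *ᵥ D.cauchyColumn α n m h =
      D.L.Phi (D.xi n m h) α • D.r n m h := by
    ext i
    have hκα : D.L.sigma (α + D.κ i) ≠ 0 := by
      rw [add_comm]; exact hgen.sigma_κ_add_extra_ne_zero i 0
    have hΦ := EllLattice.Phi_mul_Phi (hgen.sigma_xi_ne_zero n m h) (hgen.sigma_extra_ne_zero 0)
      (hgen.sigma_κ_ne_zero i) hκα (hgen.sigma_xi_add_extra_add_κ_ne_zero n m h 0 i)
    rw [DK, mulVec_diagonal, Pi.smul_apply, smul_eq_mul, r_apply, cauchyColumn, add_comm (D.κ i)]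
    simp only [cons_val_zero] at hΦ
    linear_combination -D.reducedρ i n m h * hΦ
  rw [← mulVec_smul, ← hcolumn, mulVec_mulVec, nonsing_inv_mul _ hDK, one_mulVec]

lemma calV_eq_Phi_sub_dressedPairing {α : ℂ} (hgen : D.Generic ![α])
    (hM : IsUnit (1 + D.M n m h * D.C).det)
    (hχ : ∀ i, D.L.chi α (D.κ i) (D.xi n m h) ≠ 0) :
    D.calV α n m h = D.L.Phi (D.xi n m h) α -
      dressedPairing (D.M n m h) D.C (D.s n m h) (D.cauchyColumn α n m h) := by
  rw [← Phi_smul_inv_DK_mulVec_r hgen hχ, dressedPairing_smul_right, calV, V, dressedPairing,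
    mulVec_mulVec, inv_one_add_mul_mul_comm hM, ← mulVec_mulVec, mul_sub, mul_one]

lemma w_sub_w (D : KPData N N') (n m h : ℤ) :
    D.w n (m + 1) h - D.w (n + 1) m h =
      D.L.zeta (D.xi n (m + 1) h) + D.L.zeta D.del -
        (D.L.zeta (D.xi (n + 1) m h) + D.L.zeta D.eps) -
        (D.w0 n (m + 1) h - D.w0 (n + 1) m h) := by
  simp only [w, add_smul, one_smul]
  ring

end KPData

/-- The gauge variable `𝒱_α = Φ_ξ(α)·V_α` satisfies
`(ŵ − w̃)·𝒱̂̃_α = Φ_δ(α)·𝒱̂_α − Φ_ε(α)·𝒱̃_α`. -/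
theorem calV_w_relation {N N' : ℕ} (D : KPData N N') (α : ℂ)
    (hρ0 : ∀ i, D.ρ0 i ≠ 0) (hν0 : ∀ j, D.ν0 j ≠ 0)
    (hgen : D.Generic ![α])
    (hInv : ∀ n m h : ℤ, IsUnit ((1 + D.M n m h * D.C).det))
    (hχα : ∀ (n m h : ℤ) (i : Fin N), D.L.chi α (D.κ i) (D.xi n m h) ≠ 0) :
    ∀ n m h : ℤ,
      (D.w n (m + 1) h - D.w (n + 1) m h) * D.calV α (n + 1) (m + 1) h =
        D.L.Phi D.del α * D.calV α n (m + 1) h -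
          D.L.Phi D.eps α * D.calV α (n + 1) m h := by
  intro n m h
  have hshift_del := hgen.isShift_del n (m + 1) h
  have hshift_eps := hgen.isShift_eps (n + 1) m h
  have hα : D.L.sigma α ≠ 0 := hgen.sigma_extra_ne_zero 0
  have hξα : D.L.sigma (D.xi (n + 1) (m + 1) h + α) ≠ 0 := hgen.sigma_xi_add_extra_ne_zero _ _ _ 0
  have hκα (i : Fin N) : D.L.sigma (D.κ i + α) ≠ 0 := hgen.sigma_κ_add_extra_ne_zero i 0
  have hδ := hgen.sigma_del_ne_zero
  have hε := hgen.sigma_eps_ne_zero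
  have hstep_del := hshift_del.dressedPairing_cauchyColumn hgen hδ hα hκα (hInv _ _ _) (hInv _ _ _)
    (D.s n (m + 1) h)
  have hstep_eps := hshift_eps.dressedPairing_cauchyColumn hgen hε hα hκα (hInv _ _ _) (hInv _ _ _)
    (D.s (n + 1) m h)
  have hΦ_del := hshift_del.Phi_mul_Phi hgen hδ hα hξα
  have hΦ_eps := hshift_eps.Phi_mul_Phi hgen hε hα hξα
  have hs := hshift_del.s_sub_s hshift_eps hgen hδ hε
  have hpairing := congrArg (dressedPairing (D.M (n + 1) (m + 1) h) D.C ·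
    (D.cauchyColumn α (n + 1) (m + 1) h)) hs
  simp only [dressedPairing_sub_left, dressedPairing_smul_left] at hpairing
  have hw0 (n m : ℤ) : D.w0 n m h = dressedPairing (D.M n m h) D.C (D.s n m h) (D.r n m h) := rfl
  have hcalV (n m : ℤ) := KPData.calV_eq_Phi_sub_dressedPairing hgen (hInv n m h) (hχα n m h)
  rw [D.w_sub_w, hw0, hw0, hcalV, hcalV, hcalV]
  linear_combination hpairing + hΦ_eps - hΦ_del + hstep_eps - hstep_del
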